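/- Assume R is irreducible. Then NS(R) is an infinite cyclic group: there is a unique W-invariant symmetric even ℤ-bilinear form b_R : Q∨ × Q∨ → ℤ (the basic inner product) such that the minimum of b_R(α∨, α∨) over all roots α of R equals 2 (i.e. b_R(α∨, α∨) = 2 for all short coroots α∨); b_R is positive definite, and every W-invariant symmetric even ℤ-bilinear form on Q∨ equals n · b_R for a unique integer n. -/

import Mathlib

/-- `b` is (the `ℚ`-bilinear extension of) a `W`-invariant symmetric even
`ℤ`-bilinear form on the coroot lattice `Q`, i.e. an element of the
Néron–Severi group `NS(R)`. -/
def IsNSForm {V : Type*} [AddCommGroup V] [Module ℚ V]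
    (W : Subgroup (V ≃ₗ[ℚ] V)) (Q : AddSubgroup V)
    (b : V →ₗ[ℚ] V →ₗ[ℚ] ℚ) : Prop :=
  (∀ x y : V, b x y = b y x) ∧
  (∀ w ∈ W, ∀ x y : V, b (w x) (w y) = b x y) ∧
  (∀ x ∈ Q, ∀ y ∈ Q, ∃ n : ℤ, b x y = (n : ℚ)) ∧
  (∀ x ∈ Q, ∃ n : ℤ, b x x = 2 * (n : ℚ))

theorem ns_sum_invariant {M : Type*} (S : Finset M) (e : M → M) (he : Function.Injective e)
    (hS : ∀ v ∈ S, e v ∈ S) (F : M → ℚ) : ∑ v ∈ S, F (e v) = ∑ v ∈ S, F v := by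
  classical
  have himg : S.image e = S := by
    apply Finset.eq_of_subset_of_card_le
    · intro v hv
      obtain ⟨u, hu, rfl⟩ := Finset.mem_image.1 hv
      exact hS u hu
    · rw [Finset.card_image_of_injective _ he]
  conv_rhs => rw [← himg]
  rw [Finset.sum_image (fun a _ b _ h => he h)]

/-- The roots separate points as soon as the coroots span. -/
theorem ns_separates {V : Type*} [AddCommGroup V] [Module ℚ V] [FiniteDimensional ℚ V]
    {ι : Type*} [Fintype ι]
    (root : ι → (V →ₗ[ℚ] ℚ)) (coroot : ι → V)
    (hpair : ∀ i, root i (coroot i) = 2)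
    (hrefl_co : ∀ i j, ∃ k, Module.reflection (hpair i) (coroot j) = coroot k)
    (hspan : Submodule.span ℚ (Set.range coroot) = ⊤)
    (x : V) (hx : ∀ i, root i x = 0) : x = 0 := by
  classical
  let S : Finset V := Finset.univ.image coroot
  have hmem : ∀ i, coroot i ∈ S := fun i => Finset.mem_image_of_mem _ (Finset.mem_univ i)
  have hzero : ∀ f : V →ₗ[ℚ] ℚ, (∀ i, f (coroot i) = 0) → f = 0 := by
    intro f hf
    apply LinearMap.ext_on_range (v := coroot) hspan
    intro i
    simp [hf i]
  have hinv : ∀ i (F : V → ℚ), ∑ v ∈ S, F (Module.reflection (hpair i) v) = ∑ v ∈ S, F v := by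
    intro i F
    apply ns_sum_invariant S _ (Module.reflection (hpair i)).injective
    intro v hv
    obtain ⟨j, -, rfl⟩ := Finset.mem_image.1 hv
    obtain ⟨k, hk⟩ := hrefl_co i j
    rw [hk]; exact hmem k
  have hkey : ∀ i (f : V →ₗ[ℚ] ℚ), 2 * ∑ v ∈ S, f v * root i v =
      f (coroot i) * ∑ v ∈ S, root i v * root i v := by
    intro i f
    have h := hinv i (fun v => f v * root i v)
    have h2 : ∑ v ∈ S, f (Module.reflection (hpair i) v) * root i (Module.reflection (hpair i) v)
        = f (coroot i) * ∑ v ∈ S, root i v * root i v - ∑ v ∈ S, f v * root i v := by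
      rw [Finset.mul_sum, ← Finset.sum_sub_distrib]
      apply Finset.sum_congr rfl
      intro v _
      simp only [Module.reflection_apply, map_sub, map_smul, smul_eq_mul, hpair]
      ring
    linarith
  have hpos : ∀ i, 0 < ∑ v ∈ S, root i v * root i v := by
    intro i
    apply Finset.sum_pos' (fun v _ => mul_self_nonneg _)
    exact ⟨coroot i, hmem i, by rw [hpair]; norm_num⟩
  let φ : (V →ₗ[ℚ] ℚ) →ₗ[ℚ] V :=
    { toFun := fun f => ∑ v ∈ S, f v • v
      map_add' := fun f g => by simp [add_smul, Finset.sum_add_distrib]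
      map_smul' := fun c f => by simp [mul_smul, Finset.smul_sum] }
  have hφ : ∀ f (g : V →ₗ[ℚ] ℚ), g (φ f) = ∑ v ∈ S, f v * g v := by
    intro f g
    simp [φ]
  have hinj : Function.Injective φ := by
    rw [injective_iff_map_eq_zero]
    intro f hf
    apply hzero
    intro i
    have h := hφ f f
    rw [hf, map_zero] at h
    have hh := (Finset.sum_eq_zero_iff_of_nonneg (fun v _ => mul_self_nonneg (f v))).1 h.symm
      (coroot i) (hmem i)
    exact mul_self_eq_zero.1 hh
  have hsurj : Function.Surjective φ := by
    refine (LinearMap.injective_iff_surjective_of_finrank_eq_finrank ?_).1 hinj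
    exact Subspace.dual_finrank_eq
  obtain ⟨f, rfl⟩ := hsurj x
  have hf : f = 0 := by
    apply hzero
    intro i
    have h := hkey i f
    rw [← hφ, hx i, mul_zero] at h
    exact (mul_eq_zero.1 h.symm).resolve_right (hpos i).ne'
  rw [hf, map_zero]

/-- Existence of an invariant positive definite form. -/
theorem ns_exists_form {V : Type*} [AddCommGroup V] [Module ℚ V] [FiniteDimensional ℚ V]
    {ι : Type*} [Fintype ι]
    (root : ι → (V →ₗ[ℚ] ℚ)) (coroot : ι → V)
    (hpair : ∀ i, root i (coroot i) = 2)
    (hrefl_co : ∀ i j, ∃ k, Module.reflection (hpair i) (coroot j) = coroot k)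
    (hrefl_root : ∀ i j, ∃ k, ∀ x : V,
      root j (Module.reflection (hpair i) x) = root k x)
    (hspan : Submodule.span ℚ (Set.range coroot) = ⊤) :
    ∃ b : V →ₗ[ℚ] V →ₗ[ℚ] ℚ, (∀ x y, b x y = b y x) ∧
      (∀ i x y, b (Module.reflection (hpair i) x) (Module.reflection (hpair i) y) = b x y) ∧
      (∀ x, x ≠ 0 → 0 < b x x) := by
  classical
  let S : Finset (V →ₗ[ℚ] ℚ) := Finset.univ.image root
  have hmem : ∀ i, root i ∈ S := fun i => Finset.mem_image_of_mem _ (Finset.mem_univ i)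
  let b : V →ₗ[ℚ] V →ₗ[ℚ] ℚ := LinearMap.mk₂ ℚ (fun x y => ∑ f ∈ S, f x * f y)
    (fun x y z => by simp [add_mul, Finset.sum_add_distrib])
    (fun c x y => by simp [Finset.mul_sum, mul_assoc])
    (fun x y z => by simp [mul_add, Finset.sum_add_distrib])
    (fun c x y => by simp [Finset.mul_sum, mul_left_comm])
  have hb : ∀ x y, b x y = ∑ f ∈ S, f x * f y := fun x y => rfl
  refine ⟨b, ?_, ?_, ?_⟩
  · intro x y
    simp only [hb, mul_comm]
  · intro i x y
    rw [hb, hb]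
    refine ns_sum_invariant S
      (fun f => f ∘ₗ (Module.reflection (hpair i)).toLinearMap) ?_ ?_ (fun f => f x * f y)
    · intro f g hfg
      ext v
      obtain ⟨u, rfl⟩ := (Module.reflection (hpair i)).surjective v
      exact LinearMap.congr_fun hfg u
    · intro f hf
      obtain ⟨j, -, rfl⟩ := Finset.mem_image.1 hf
      obtain ⟨k, hk⟩ := hrefl_root i j
      have : root j ∘ₗ (Module.reflection (hpair i)).toLinearMap = root k := LinearMap.ext hk
      simp only [this]
      exact hmem k
  · intro x hx
    by_contra hle
    apply hx
    apply ns_separates root coroot hpair hrefl_co hspan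
    intro i
    have h0 : ∑ f ∈ S, f x * f x = 0 :=
      le_antisymm (not_lt.1 hle) (Finset.sum_nonneg fun f _ => mul_self_nonneg _)
    have hh := (Finset.sum_eq_zero_iff_of_nonneg (fun f _ => mul_self_nonneg (f x))).1 h0
      (root i) (hmem i)
    exact mul_self_eq_zero.1 hh

/-- An integer-ratio lemma. -/
theorem ns_ratio (a a₂ : ℤ) (p q : ℚ) (hp : 0 < p) (hpq : p ≤ q) (ha : a ≠ 0)
    (h : (a : ℚ) * q = a₂ * p) (h4 : a * a₂ ≤ 4) : ∃ n : ℤ, q = n * p := by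
  have haQ : (a : ℚ) ≠ 0 := by exact_mod_cast ha
  have hmul : (a : ℚ) * a * q = (a * a₂ : ℤ) * p := by
    push_cast; rw [mul_assoc, h]; ring
  have hq : 0 < q := lt_of_lt_of_le hp hpq
  have ha2 : (0 : ℚ) < (a : ℚ) * a := mul_self_pos.2 haQ
  have hle : a * a ≤ a * a₂ := by
    have : (a : ℚ) * a * p ≤ (a * a₂ : ℤ) * p := by
      rw [← hmul]; exact mul_le_mul_of_nonneg_left hpq ha2.le
    have := le_of_mul_le_mul_right this hp
    exact_mod_cast this
  have h1 : a ≤ 2 := by nlinarith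
  have h2 : -2 ≤ a := by nlinarith
  have : a = -2 ∨ a = -1 ∨ a = 1 ∨ a = 2 := by omega
  rcases this with rfl | rfl | rfl | rfl
  · have : a₂ = -2 := by omega
    subst this
    exact ⟨1, by push_cast at h ⊢; linarith⟩
  · exact ⟨-a₂, by push_cast at h ⊢; linarith⟩
  · exact ⟨a₂, by push_cast at h ⊢; linarith⟩
  · have : a₂ = 2 := by omega
    subst this
    exact ⟨1, by push_cast at h ⊢; linarith⟩

/-- For an irreducible root system `R`, the group `NS(R)` of `W`-invariant
symmetric even `ℤ`-bilinear forms on the coroot lattice is infinite cyclic: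
there is a unique such form `bR` (the basic inner product) whose minimum value
on `{b(α∨, α∨) | α a root}` equals `2`; it is positive definite, and every
element of `NS(R)` is `n • bR` for a unique integer `n`. -/
theorem ns_irreducible_infinite_cyclic
    (V : Type*) [AddCommGroup V] [Module ℚ V] [FiniteDimensional ℚ V]
    (ι : Type*) [Fintype ι] [Nonempty ι]
    (root : ι → (V →ₗ[ℚ] ℚ)) (coroot : ι → V)
    (hpair : ∀ i, root i (coroot i) = 2)
    (hcrys : ∀ i j, ∃ n : ℤ, root i (coroot j) = (n : ℚ))
    (hreduced : ∀ i j, (∃ c : ℚ, root j = c • root i) →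
      root j = root i ∨ root j = -root i)
    (hrefl_co : ∀ i j, ∃ k, Module.reflection (hpair i) (coroot j) = coroot k)
    (hrefl_root : ∀ i j, ∃ k, ∀ x : V,
      root j (Module.reflection (hpair i) x) = root k x)
    (hspan : Submodule.span ℚ (Set.range coroot) = ⊤)
    (hirr : ∀ s : Set ι, (∀ i ∈ s, ∀ j ∉ s, root i (coroot j) = 0) →
      s = ∅ ∨ s = Set.univ)
    (W : Subgroup (V ≃ₗ[ℚ] V))
    (hW : W = Subgroup.closure (Set.range fun i => Module.reflection (hpair i)))
    (Q : AddSubgroup V)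
    (hQ : Q = AddSubgroup.closure (Set.range coroot)) :
    ∃ bR : V →ₗ[ℚ] V →ₗ[ℚ] ℚ,
      (IsNSForm W Q bR ∧
        IsLeast (Set.range fun i => bR (coroot i) (coroot i)) 2) ∧
      (∀ b' : V →ₗ[ℚ] V →ₗ[ℚ] ℚ, IsNSForm W Q b' →
        IsLeast (Set.range fun i => b' (coroot i) (coroot i)) 2 → b' = bR) ∧
      (∀ x : V, x ≠ 0 → 0 < bR x x) ∧
      (∀ b' : V →ₗ[ℚ] V →ₗ[ℚ] ℚ, IsNSForm W Q b' →
        ∃! n : ℤ, b' = (n : ℚ) • bR) := by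
  obtain ⟨b, hsymm, hinv, hposdef⟩ :=
    ns_exists_form root coroot hpair hrefl_co hrefl_root hspan
  have hrefl_mem : ∀ i, Module.reflection (hpair i) ∈ W := fun i => by
    rw [hW]; exact Subgroup.subset_closure ⟨i, rfl⟩
  have hcoQ : ∀ i, coroot i ∈ Q := fun i => by
    rw [hQ]; exact AddSubgroup.subset_closure ⟨i, rfl⟩
  -- the key identity for reflection-invariant forms
  have hkey : ∀ c : V →ₗ[ℚ] V →ₗ[ℚ] ℚ,
      (∀ i x y, c (Module.reflection (hpair i) x) (Module.reflection (hpair i) y) = c x y) →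
      ∀ i y, 2 * c (coroot i) y = root i y * c (coroot i) (coroot i) := by
    intro c hc i y
    have h := hc i (coroot i) y
    simp only [Module.reflection_apply, hpair, map_sub, map_smul, smul_eq_mul,
      LinearMap.sub_apply, LinearMap.smul_apply] at h
    linarith
  have hqpos : ∀ i, 0 < b (coroot i) (coroot i) := by
    intro i
    apply hposdef
    intro h0
    have := hpair i
    rw [h0, map_zero] at this
    norm_num at this
  have hkb := hkey b hinv
  -- all invariant symmetric forms are proportional to `b`
  have hprop : ∀ c : V →ₗ[ℚ] V →ₗ[ℚ] ℚ, (∀ x y, c x y = c y x) →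
      (∀ i x y, c (Module.reflection (hpair i) x) (Module.reflection (hpair i) y) = c x y) →
      ∃ t : ℚ, c = t • b := by
    intro c hcs hci
    have hkc := hkey c hci
    obtain ⟨i₀⟩ := ‹Nonempty ι›
    have hs : {i | c (coroot i) (coroot i) * b (coroot i₀) (coroot i₀) =
        b (coroot i) (coroot i) * c (coroot i₀) (coroot i₀)} = Set.univ := by
      refine (hirr _ ?_).resolve_left ?_
      · intro i hi j hj
        by_contra hne
        apply hj
        simp only [Set.mem_ofPred_eq] at hi ⊢
        have hb1 := hkb i (coroot j)
        have hb2 := hkb j (coroot i)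
        have hc1 := hkc i (coroot j)
        have hc2 := hkc j (coroot i)
        rw [hsymm (coroot j) (coroot i), hb1] at hb2
        rw [hcs (coroot j) (coroot i), hc1] at hc2
        have hne2 : root j (coroot i) ≠ 0 := by
          intro h0
          rw [h0, zero_mul] at hb2
          exact (mul_ne_zero hne (hqpos i).ne') hb2
        apply mul_left_cancel₀ hne2
        rw [← mul_assoc, ← mul_assoc, ← hb2, ← hc2, mul_assoc, mul_assoc, hi]
      · apply Set.Nonempty.ne_empty
        exact ⟨i₀, by simp only [Set.mem_ofPred_eq]; ring⟩
    refine ⟨c (coroot i₀) (coroot i₀) / b (coroot i₀) (coroot i₀), ?_⟩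
    apply LinearMap.ext_on_range (v := coroot) hspan
    intro i
    ext y
    have hi : i ∈ (Set.univ : Set ι) := Set.mem_univ i
    rw [← hs] at hi
    simp only [Set.mem_ofPred_eq] at hi
    have h1 := hkb i y
    have h2 := hkc i y
    have hp := (hqpos i₀).ne'
    simp only [LinearMap.smul_apply, smul_eq_mul]
    rw [div_mul_eq_mul_div, eq_div_iff hp]
    have : 2 * (c (coroot i) y * b (coroot i₀) (coroot i₀)) =
        2 * (c (coroot i₀) (coroot i₀) * b (coroot i) y) := by
      rw [← mul_assoc, h2, mul_left_comm 2, h1, mul_assoc, hi]; ring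
    linarith
  -- Cauchy-Schwarz
  have hCS : ∀ x y, b x y * b x y ≤ b x x * b y y := by
    intro x y
    by_cases hy : y = 0
    · simp [hy]
    have hyy := hposdef y hy
    have hnn : ∀ z, 0 ≤ b z z := by
      intro z
      by_cases hz : z = 0
      · simp [hz]
      · exact (hposdef z hz).le
    have h := hnn (b y y • x - b x y • y)
    simp only [map_sub, map_smul, smul_eq_mul, LinearMap.sub_apply, LinearMap.smul_apply,
      hsymm y x] at h
    have hh : 0 ≤ b y y * (b x x * b y y - b x y * b x y) := by linarith
    have := nonneg_of_mul_nonneg_right hh hyy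
    linarith
  obtain ⟨j₀, hj₀⟩ := Finite.exists_min (fun i => b (coroot i) (coroot i))
  -- integrality of the length ratios
  have hratio : ∀ i, ∃ n : ℤ, b (coroot i) (coroot i) = n * b (coroot j₀) (coroot j₀) := by
    intro i
    have hs : {k | ∀ t, b (coroot t) (coroot t) = b (coroot i) (coroot i) →
        b (coroot k) (coroot t) = 0} = ∅ := by
      refine (hirr _ ?_).resolve_right ?_
      · intro k hk l hl
        simp only [Set.mem_ofPred_eq, not_forall] at hk hl
        obtain ⟨t, ht, hlt⟩ := hl
        obtain ⟨u, hu⟩ := hrefl_co l t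
        have h1 := hk t ht
        have h2 := hk u (by rw [← hu, hinv, ht])
        rw [← hu] at h2
        simp only [Module.reflection_apply, map_sub, map_smul, smul_eq_mul, h1, zero_sub,
          neg_eq_zero, mul_eq_zero] at h2
        have hne : root l (coroot t) ≠ 0 := by
          intro h0
          have h3 := hkb l (coroot t)
          rw [h0, zero_mul] at h3
          apply hlt
          linarith
        have h4 := h2.resolve_left hne
        have h5 := hkb k (coroot l)
        rw [h4, mul_zero] at h5
        exact (mul_eq_zero.1 h5.symm).resolve_right (hqpos k).ne'
      · intro hu
        have : i ∈ (Set.univ : Set ι) := Set.mem_univ i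
        rw [← hu] at this
        exact (hqpos i).ne' (this i rfl)
    have hj : j₀ ∉ {k | ∀ t, b (coroot t) (coroot t) = b (coroot i) (coroot i) →
        b (coroot k) (coroot t) = 0} := by rw [hs]; simp
    simp only [Set.mem_ofPred_eq, not_forall] at hj
    obtain ⟨t, ht, hne⟩ := hj
    rw [← ht]
    obtain ⟨a, ha⟩ := hcrys t j₀
    obtain ⟨a₂, ha₂⟩ := hcrys j₀ t
    have h1 := hkb t (coroot j₀)
    have h2 := hkb j₀ (coroot t)
    rw [ha] at h1
    rw [ha₂] at h2
    rw [hsymm] at h1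
    refine ns_ratio a a₂ _ _ (hqpos j₀) (hj₀ t) ?_ (by rw [← h1, h2]) ?_
    · rintro rfl
      apply hne
      simp at h1
      exact h1
    · have hcs := hCS (coroot j₀) (coroot t)
      have hpp := mul_pos (hqpos j₀) (hqpos t)
      have : ((a * a₂ : ℤ) : ℚ) * (b (coroot j₀) (coroot j₀) * b (coroot t) (coroot t)) ≤
          (4 : ℤ) * (b (coroot j₀) (coroot j₀) * b (coroot t) (coroot t)) := by
        have e : ((a * a₂ : ℤ) : ℚ) * (b (coroot j₀) (coroot j₀) * b (coroot t) (coroot t)) =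
            (a * b (coroot t) (coroot t)) * (a₂ * b (coroot j₀) (coroot j₀)) := by
          push_cast; ring
        rw [e, ← h1, ← h2]
        push_cast
        linarith
      exact_mod_cast le_of_mul_le_mul_right this hpp
  have hm := hqpos j₀
  obtain ⟨bR, hbR⟩ : ∃ bR : V →ₗ[ℚ] V →ₗ[ℚ] ℚ, bR = (2 / b (coroot j₀) (coroot j₀)) • b :=
    ⟨_, rfl⟩
  have happ : ∀ x y, bR x y = 2 / b (coroot j₀) (coroot j₀) * b x y := by
    intro x y; rw [hbR]; rfl
  have hRsymm : ∀ x y, bR x y = bR y x := fun x y => by rw [happ, happ, hsymm x y]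
  have hRinv : ∀ i x y, bR (Module.reflection (hpair i) x) (Module.reflection (hpair i) y) =
      bR x y := fun i x y => by rw [happ, happ, hinv]
  have hkR := hkey bR hRinv
  have hRj : bR (coroot j₀) (coroot j₀) = 2 := by
    rw [happ]; field_simp
  have hReven : ∀ i, ∃ n : ℤ, bR (coroot i) (coroot i) = 2 * n := by
    intro i
    obtain ⟨n, hn⟩ := hratio i
    refine ⟨n, ?_⟩
    rw [happ, hn]; field_simp
  have hRmin : ∀ i, 2 ≤ bR (coroot i) (coroot i) := by
    intro i
    rw [← hRj, happ, happ]
    exact mul_le_mul_of_nonneg_left (hj₀ i) (by positivity)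
  have hRint : ∀ x ∈ Q, ∀ y ∈ Q, ∃ n : ℤ, bR x y = (n : ℚ) := by
    intro x hx y hy
    rw [hQ] at hx hy
    induction hx, hy using AddSubgroup.closure_induction₂ with
    | mem x y hx hy =>
      obtain ⟨i, rfl⟩ := hx
      obtain ⟨j, rfl⟩ := hy
      obtain ⟨n, hn⟩ := hReven i
      obtain ⟨a, ha⟩ := hcrys i j
      have h := hkR i (coroot j)
      rw [hn, ha] at h
      exact ⟨a * n, by push_cast; linarith⟩
    | zero_left x hx => exact ⟨0, by simp⟩
    | zero_right x hx => exact ⟨0, by simp⟩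
    | add_left x y z hx hy hz h1 h2 =>
      obtain ⟨n, hn⟩ := h1
      obtain ⟨m, hm⟩ := h2
      exact ⟨n + m, by simp [hn, hm]⟩
    | add_right x y z hx hy hz h1 h2 =>
      obtain ⟨n, hn⟩ := h1
      obtain ⟨m, hm⟩ := h2
      exact ⟨n + m, by simp [hn, hm]⟩
    | neg_left x y hx hy h1 =>
      obtain ⟨n, hn⟩ := h1
      exact ⟨-n, by simp [hn]⟩
    | neg_right x y hx hy h1 =>
      obtain ⟨n, hn⟩ := h1
      exact ⟨-n, by simp [hn]⟩
  have hRQ : ∀ x ∈ Q, ∃ n : ℤ, bR x x = 2 * (n : ℚ) := by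
    intro x hx
    rw [hQ] at hx
    induction hx using AddSubgroup.closure_induction with
    | mem x hx => obtain ⟨i, rfl⟩ := hx; exact hReven i
    | zero => exact ⟨0, by simp⟩
    | add x y hx hy h1 h2 =>
      obtain ⟨n, hn⟩ := h1
      obtain ⟨m, hm⟩ := h2
      obtain ⟨k, hk⟩ := hRint x (by rw [hQ]; exact hx) y (by rw [hQ]; exact hy)
      refine ⟨n + m + k, ?_⟩
      simp only [map_add, LinearMap.add_apply, hn, hm, hRsymm y x, hk]
      push_cast; ring
    | neg x hx h1 =>
      obtain ⟨n, hn⟩ := h1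
      exact ⟨n, by simp [hn]⟩
  have hRW : ∀ w ∈ W, ∀ x y : V, bR (w x) (w y) = bR x y := by
    intro w hw
    rw [hW] at hw
    induction hw using Subgroup.closure_induction with
    | mem w hw => obtain ⟨i, rfl⟩ := hw; exact hRinv i
    | one => intro x y; rfl
    | mul u v hu hv h1 h2 =>
      intro x y
      rw [LinearEquiv.mul_apply, LinearEquiv.mul_apply, h1, h2]
    | inv u hu h1 =>
      intro x y
      rw [← h1, ← LinearEquiv.mul_apply, ← LinearEquiv.mul_apply, mul_inv_cancel]
      rfl
  have hpropR : ∀ c, IsNSForm W Q c → ∃ t : ℚ, c = t • bR := by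
    intro c hc
    obtain ⟨t, ht⟩ := hprop c hc.1 (fun i => hc.2.1 _ (hrefl_mem i))
    refine ⟨t * (b (coroot j₀) (coroot j₀) / 2), ?_⟩
    rw [ht, hbR, smul_smul]
    congr 1
    field_simp
  refine ⟨bR, ⟨⟨hRsymm, hRW, hRint, hRQ⟩, ⟨j₀, hRj⟩, ?_⟩, ?_, ?_, ?_⟩
  · rintro _ ⟨i, rfl⟩
    exact hRmin i
  · intro c hc hmin
    obtain ⟨t, rfl⟩ := hpropR c hc
    obtain ⟨⟨i, hi⟩, hlow⟩ := hmin
    have h1 := hlow ⟨j₀, rfl⟩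
    have h2 := hRmin i
    simp only [LinearMap.smul_apply, smul_eq_mul, hRj] at hi h1
    have : t = 1 := by nlinarith
    rw [this, one_smul]
  · intro x hx
    rw [happ]
    have := hposdef x hx
    positivity
  · intro c hc
    obtain ⟨t, rfl⟩ := hpropR c hc
    obtain ⟨n, hn⟩ := hc.2.2.2 (coroot j₀) (hcoQ j₀)
    simp only [LinearMap.smul_apply, smul_eq_mul, hRj] at hn
    have ht : t = n := by linarith
    refine ⟨n, by simp only [ht], ?_⟩
    intro k hk
    have h := LinearMap.congr_fun (LinearMap.congr_fun hk (coroot j₀)) (coroot j₀)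
    simp only [LinearMap.smul_apply, smul_eq_mul, hRj, ht] at h
    have : (k : ℚ) = n := by linarith
    exact_mod_cast this
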